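/- Let A, B, C be pairwise disjoint subsets of V with A and B nonempty (C possibly empty). Then X_A ⟂ X_B | X_C holds if and only if λ_{A'∪B'∪C'}^{A∪B∪C}(x) = 0 for every nonempty A' ⊆ A, every nonempty B' ⊆ B, every C' ⊆ C, and every x ∈ 𝔛_{A'∪B'∪C'}. -/

import Mathlib

open Finset

variable {V : Type*} [Fintype V] [DecidableEq V]
variable {𝔛 : V → Type*} [∀ v, Fintype (𝔛 v)] [∀ v, DecidableEq (𝔛 v)]
  [∀ v, Nonempty (𝔛 v)]

/-- The marginal `p_A` of a distribution `p` on the full table, evaluated at the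
`A`-coordinates of `x`. -/
noncomputable def margin (p : (∀ v, 𝔛 v) → ℝ) (A : Finset V) (x : ∀ v, 𝔛 v) : ℝ :=
  ∑ y ∈ Finset.univ.filter (fun y : ∀ v, 𝔛 v => ∀ v ∈ A, y v = x v), p y

/-- `ν_L^M(x_L) = (1/|𝔛_{M∖L}|) Σ_{j ∈ 𝔛_M : j_L = x_L} log p_M(j)`, written with sums over
full configurations (for `L ⊆ M` the extra coordinates cancel against the normalization). -/
noncomputable def nu (p : (∀ v, 𝔛 v) → ℝ) (L M : Finset V) (x : ∀ v, 𝔛 v) : ℝ :=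
  (∏ v ∈ Lᶜ, (Fintype.card (𝔛 v) : ℝ))⁻¹ *
    ∑ j ∈ Finset.univ.filter (fun j : ∀ v, 𝔛 v => ∀ v ∈ L, j v = x v),
      Real.log (margin p M j)

/-- The marginal log-linear parameter `λ_L^M(x_L) = Σ_{L' ⊆ L} (−1)^{|L∖L'|} ν_{L'}^M(x_{L'})`. -/
noncomputable def mll (p : (∀ v, 𝔛 v) → ℝ) (L M : Finset V) (x : ∀ v, 𝔛 v) : ℝ :=
  ∑ L' ∈ L.powerset, (-1 : ℝ) ^ ((L \ L').card) * nu p L' M x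

/-- `X_A ⟂ X_B | X_C`: `p_{A∪B∪C}·p_C = p_{A∪C}·p_{B∪C}` pointwise. -/
def CondIndep (p : (∀ v, 𝔛 v) → ℝ) (A B C : Finset V) : Prop :=
  ∀ x : ∀ v, 𝔛 v,
    margin p (A ∪ B ∪ C) x * margin p C x = margin p (A ∪ C) x * margin p (B ∪ C) x

/-!
Write `f = log p_M` with `M = A ∪ B ∪ C`. Averaging `f` over the coordinates outside `L` gives
`ν_L^M`, so `λ_L^M` is the Möbius transform of these averages, and Möbius inversion expands `f` as
the sum of its `λ_L^M`. Each `λ_L^M` depends only on the coordinates in `L`, and it vanishes if `f`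
does not depend on some coordinate in `L`. Hence `λ_L^M = 0` for all `L` contained in neither
`S = A ∪ C` nor `T = B ∪ C` exactly when `f = g + h`, where `g` depends on `S` and `h` on `T`.

This additive splitting is the factorization `p_{S ∪ T} = e^g e^h`, which is equivalent to
`p_{S ∪ T} p_{S ∩ T} = p_S p_T`. Up to constants, marginals are averages of `p_{S ∪ T}`, and the
averaging operators compose by intersecting their sets and pull out factors depending only on the
fixed coordinates, so both sides of the identity can be evaluated in terms of `g` and `h`.
-/

open scoped BigOperators

section MoebiusTransform

variable {ι R : Type*} [DecidableEq ι] [Ring R]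

/-- The Möbius transform of a set function over the lattice of finite sets; it produces the
parameters `λ_L` from the averages `ν_L'`. -/
def moebiusTransform (g : Finset ι → R) (s : Finset ι) : R :=
  ∑ t ∈ s.powerset, (-1) ^ #(s \ t) * g t

lemma moebiusTransform_insert {a : ι} {s : Finset ι} (ha : a ∉ s) (g : Finset ι → R) :
    moebiusTransform g (insert a s) = moebiusTransform (fun t => g (insert a t) - g t) s := by
  rw [moebiusTransform, sum_powerset_insert ha, ← sum_add_distrib]
  refine sum_congr rfl fun t ht => ?_
  have hat : a ∉ t := fun h => ha (mem_powerset.1 ht h)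
  have h_sdiff : insert a s \ insert a t = s \ t := by grind
  rw [h_sdiff, insert_sdiff_of_notMem _ hat, card_insert_of_notMem (by simp [ha])]
  noncomm_ring

theorem sum_powerset_moebiusTransform (g : Finset ι → R) (s : Finset ι) :
    ∑ t ∈ s.powerset, moebiusTransform g t = g s := by
  induction s using Finset.induction_on generalizing g with
  | empty => simp [moebiusTransform]
  | insert a s ha ih =>
    have h_insert : ∀ t ∈ s.powerset, moebiusTransform g (insert a t) =
        moebiusTransform (fun t => g (insert a t) - g t) t := fun t ht =>
      moebiusTransform_insert (fun h => ha (mem_powerset.1 ht h)) g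
    rw [sum_powerset_insert ha, sum_congr rfl h_insert, ih, ih, add_sub_cancel]

end MoebiusTransform

section CoordAvg

variable {ι : Type*} [Fintype ι] [DecidableEq ι] {X : ι → Type*} [∀ i, Fintype (X i)]

/-- The average of `f` over the coordinates outside `S`, those in `S` being fixed to their values
in `x`. Averaging over whole configurations `y` keeps all types independent of `S`; the coordinates
of `y` in `S` are ignored. -/
noncomputable def coordAvg (S : Finset ι) (f : (∀ i, X i) → ℝ) (x : ∀ i, X i) : ℝ :=
  𝔼 y, f (S.piecewise x y)

lemma dependsOn_coordAvg (S : Finset ι) (f : (∀ i, X i) → ℝ) : DependsOn (coordAvg S f) S :=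
  fun _ _ hxy => expect_congr rfl fun _ _ =>
    congrArg f (S.piecewise_congr hxy fun _ _ => rfl)

lemma coordAvg_add (S : Finset ι) (f g : (∀ i, X i) → ℝ) :
    coordAvg S (f + g) = coordAvg S f + coordAvg S g :=
  funext fun _ => expect_add_distrib _ _ _

lemma coordAvg_mul_of_dependsOn {S : Finset ι} {f : (∀ i, X i) → ℝ} (hf : DependsOn f S)
    (g : (∀ i, X i) → ℝ) : coordAvg S (f * g) = f * coordAvg S g := by
  funext x
  have hfx : ∀ y, f (S.piecewise x y) = f x := fun y =>
    hf fun i hi => S.piecewise_eq_of_mem x y hi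
  simp only [coordAvg, Pi.mul_apply, hfx, mul_expect]

lemma card_filter_forall_mem_eq [∀ i, DecidableEq (X i)] (S : Finset ι) (x : ∀ i, X i) :
    #{y : ∀ i, X i | ∀ i ∈ S, y i = x i} = ∏ i ∈ Sᶜ, Fintype.card (X i) := by
  have h_fiber : ({y : ∀ i, X i | ∀ i ∈ S, y i = x i} : Finset (∀ i, X i)) =
      Fintype.piFinset fun i => if i ∈ Sᶜ then univ else {x i} := by
    ext y
    simp only [mem_filter_univ, Fintype.mem_piFinset]
    refine forall_congr' fun i => ?_
    by_cases hi : i ∈ S <;> simp [hi]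
  rw [h_fiber, Fintype.card_piFinset]
  simp only [apply_ite card, card_univ, card_singleton, Fintype.prod_ite_mem]

variable [∀ i, Nonempty (X i)]

lemma coordAvg_eq_self_of_dependsOn {S : Finset ι} {f : (∀ i, X i) → ℝ} (hf : DependsOn f S) :
    coordAvg S f = f := by
  have h_one : coordAvg S (1 : (∀ i, X i) → ℝ) = 1 := funext fun _ => Fintype.expect_const 1
  simpa only [mul_one, h_one] using coordAvg_mul_of_dependsOn hf 1

-- Exchanging the `S`-coordinates of two independent uniform configurations preserves their law.
lemma expect_expect_piecewise {M : Type*} [AddCommMonoid M] [Module ℚ≥0 M] (S : Finset ι)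
    (f : (∀ i, X i) → M) : 𝔼 y, 𝔼 z, f (S.piecewise y z) = 𝔼 y, f y := by
  let swap (q : (∀ i, X i) × (∀ i, X i)) := (S.piecewise q.1 q.2, S.piecewise q.2 q.1)
  have h_swap : Function.Involutive swap := fun q => by
    ext i <;> by_cases hi : i ∈ S <;> simp [swap, hi]
  calc 𝔼 y, 𝔼 z, f (S.piecewise y z) = 𝔼 q, f (swap q).1 := by
        rw [← expect_product', univ_product_univ]
    _ = 𝔼 q : (∀ i, X i) × (∀ i, X i), f q.1 :=
        Fintype.expect_equiv h_swap.toPerm _ _ fun _ => rfl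
    _ = 𝔼 y, f y := by
        rw [← univ_product_univ, expect_product' _ _ fun y _ => f y]
        simp only [Fintype.expect_const]

lemma coordAvg_coordAvg (S T : Finset ι) (f : (∀ i, X i) → ℝ) :
    coordAvg S (coordAvg T f) = coordAvg (S ∩ T) f := by
  funext x
  have h_piecewise : ∀ y z : ∀ i, X i, T.piecewise (S.piecewise x y) z =
      (S ∩ T).piecewise x (T.piecewise y z) := fun y z => by
    ext i
    by_cases hS : i ∈ S <;> by_cases hT : i ∈ T <;> simp [hS, hT]
  simp only [coordAvg, h_piecewise]
  exact expect_expect_piecewise T fun y => f ((S ∩ T).piecewise x y)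

lemma coordAvg_inter_of_dependsOn {T : Finset ι} {f : (∀ i, X i) → ℝ} (hf : DependsOn f T)
    (S : Finset ι) : coordAvg (S ∩ T) f = coordAvg S f := by
  rw [← coordAvg_coordAvg, coordAvg_eq_self_of_dependsOn hf]

theorem mul_coordAvg_inter_of_dependsOn {S T : Finset ι} {g h : (∀ i, X i) → ℝ}
    (hg : DependsOn g S) (hh : DependsOn h T) :
    g * h * coordAvg (S ∩ T) (g * h) = coordAvg S (g * h) * coordAvg T (g * h) := by
  have h_left : coordAvg S (g * h) = g * coordAvg (S ∩ T) h := by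
    rw [coordAvg_mul_of_dependsOn hg, coordAvg_inter_of_dependsOn hh]
  have h_right : coordAvg T (g * h) = h * coordAvg (S ∩ T) g := by
    rw [mul_comm g, coordAvg_mul_of_dependsOn hh, inter_comm, coordAvg_inter_of_dependsOn hg]
  have h_dep : DependsOn (coordAvg (S ∩ T) g) S :=
    (dependsOn_coordAvg _ g).mono (coe_subset.2 inter_subset_left)
  have h_inter : coordAvg (S ∩ T) (g * h) = coordAvg (S ∩ T) g * coordAvg (S ∩ T) h := by
    rw [← coordAvg_coordAvg, h_right, mul_comm, coordAvg_mul_of_dependsOn h_dep,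
      coordAvg_inter_of_dependsOn hh]
  rw [h_left, h_right, h_inter]
  ring

lemma sum_filter_forall_mem_eq [∀ i, DecidableEq (X i)] (S : Finset ι) (f : (∀ i, X i) → ℝ)
    (x : ∀ i, X i) : ∑ y with ∀ i ∈ S, y i = x i, f y =
      (∏ i ∈ Sᶜ, (Fintype.card (X i) : ℝ)) * coordAvg S f x := by
  have h_split : ∀ y, (𝔼 z, if ∀ i ∈ S, S.piecewise y z i = x i then f (S.piecewise y z) else 0) =
      if ∀ i ∈ S, y i = x i then coordAvg S f x else 0 := fun y => by
    have h_iff : ∀ z : ∀ i, X i, (∀ i ∈ S, S.piecewise y z i = x i) ↔ ∀ i ∈ S, y i = x i :=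
      fun z => forall₂_congr fun i hi => by rw [piecewise_eq_of_mem _ _ _ hi]
    by_cases hy : ∀ i ∈ S, y i = x i
    · simp only [h_iff, if_pos hy]
      exact expect_congr rfl fun z _ => congrArg f (S.piecewise_congr hy fun _ _ => rfl)
    · simp only [h_iff, if_neg hy, expect_const_zero]
  rw [sum_filter, ← Fintype.card_mul_expect, ← expect_expect_piecewise S]
  simp only [h_split]
  rw [Fintype.card_mul_expect, ← sum_filter, sum_const, card_filter_forall_mem_eq, nsmul_eq_mul,
    Nat.cast_prod]

end CoordAvg

section Interaction

variable {ι : Type*} [Fintype ι] [DecidableEq ι] {X : ι → Type*} [∀ i, Fintype (X i)]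

/-- The `L`-interaction term in the effect-coded (sum-to-zero) log-linear expansion of `f`;
`mll p L M` is the `L`-interaction of `log p_M`. -/
noncomputable def interaction (f : (∀ i, X i) → ℝ) (L : Finset ι) (x : ∀ i, X i) : ℝ :=
  moebiusTransform (fun S => coordAvg S f x) L

lemma dependsOn_interaction (f : (∀ i, X i) → ℝ) (L : Finset ι) :
    DependsOn (interaction f L) L := fun _ _ hxy =>
  sum_congr rfl fun S hS => congrArg _ <|
    dependsOn_coordAvg S f fun i hi => hxy i (mem_powerset.1 hS hi)

lemma interaction_add (f g : (∀ i, X i) → ℝ) (L : Finset ι) :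
    interaction (f + g) L = interaction f L + interaction g L := by
  funext x
  simp only [interaction, moebiusTransform, coordAvg_add, Pi.add_apply, mul_add, sum_add_distrib]

variable [∀ i, Nonempty (X i)]

lemma sum_interaction (f : (∀ i, X i) → ℝ) : ∑ L, interaction f L = f := by
  funext x
  rw [Finset.sum_apply]
  simp only [interaction]
  rw [← powerset_univ, sum_powerset_moebiusTransform,
    coordAvg_eq_self_of_dependsOn (coe_univ (α := ι) ▸ dependsOn_univ f)]

lemma interaction_eq_zero_of_dependsOn {f : (∀ i, X i) → ℝ} {D L : Finset ι}
    (hf : DependsOn f D) (hL : ¬ L ⊆ D) : interaction f L = 0 := by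
  obtain ⟨a, haL, haD⟩ := not_subset.1 hL
  funext x
  have h_insert : ∀ S, coordAvg (insert a S) f = coordAvg S f := fun S => by
    rw [← coordAvg_inter_of_dependsOn hf, insert_inter_of_notMem haD,
      coordAvg_inter_of_dependsOn hf]
  rw [interaction, ← insert_erase haL, moebiusTransform_insert (notMem_erase a L)]
  simp [h_insert, moebiusTransform]

theorem exists_dependsOn_add_iff_interaction_eq_zero {f : (∀ i, X i) → ℝ} {S T : Finset ι} :
    (∃ g h, DependsOn g S ∧ DependsOn h T ∧ f = g + h) ↔
      ∀ L, ¬ L ⊆ S → ¬ L ⊆ T → interaction f L = 0 := by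
  constructor
  · rintro ⟨g, h, hg, hh, rfl⟩ L hLS hLT
    rw [interaction_add, interaction_eq_zero_of_dependsOn hg hLS,
      interaction_eq_zero_of_dependsOn hh hLT, add_zero]
  · intro h_zero
    refine ⟨∑ L with L ⊆ S, interaction f L, ∑ L with ¬ L ⊆ S, interaction f L, ?_, ?_, ?_⟩
    · intro x y hxy
      simp only [Finset.sum_apply]
      exact sum_congr rfl fun L hL =>
        dependsOn_interaction f L fun i hi => hxy i ((mem_filter_univ L).1 hL hi)
    · intro x y hxy
      simp only [Finset.sum_apply]
      refine sum_congr rfl fun L hL => ?_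
      by_cases hLT : L ⊆ T
      · exact dependsOn_interaction f L fun i hi => hxy i (hLT hi)
      · rw [h_zero L ((mem_filter_univ L).1 hL) hLT, Pi.zero_apply, Pi.zero_apply]
    · rw [sum_filter_add_sum_filter_not, sum_interaction]

end Interaction

section Margin

lemma prod_card_ne_zero {ι : Type*} {X : ι → Type*} [∀ i, Fintype (X i)] [∀ i, Nonempty (X i)]
    (S : Finset ι) : ∏ i ∈ S, (Fintype.card (X i) : ℝ) ≠ 0 :=
  prod_ne_zero_iff.2 fun _ _ => Nat.cast_ne_zero.2 Fintype.card_ne_zero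

variable {ι : Type*} [Fintype ι] [DecidableEq ι] {X : ι → Type*} [∀ i, Fintype (X i)]
  [∀ i, DecidableEq (X i)]

lemma dependsOn_margin (p : (∀ i, X i) → ℝ) (S : Finset ι) : DependsOn (margin p S) S := by
  intro x y hxy
  have h_iff : ∀ z : ∀ i, X i, (∀ i ∈ S, z i = x i) ↔ ∀ i ∈ S, z i = y i := fun z =>
    forall₂_congr fun i hi => by rw [hxy i hi]
  simp only [margin, h_iff]

lemma margin_pos {p : (∀ i, X i) → ℝ} (hp : ∀ x, 0 < p x) (S : Finset ι) (x : ∀ i, X i) :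
    0 < margin p S x :=
  sum_pos (fun y _ => hp y) ⟨x, by simp⟩

variable [∀ i, Nonempty (X i)]

lemma mll_eq_interaction (p : (∀ i, X i) → ℝ) (L M : Finset ι) :
    mll p L M = interaction (fun x => Real.log (margin p M x)) L := by
  funext x
  simp only [mll, nu, interaction, moebiusTransform, sum_filter_forall_mem_eq,
    inv_mul_cancel_left₀ (prod_card_ne_zero _)]

lemma prod_card_mul_coordAvg_margin (p : (∀ i, X i) → ℝ) {S T : Finset ι} (hST : S ⊆ T)
    (x : ∀ i, X i) : (∏ i ∈ Sᶜ, (Fintype.card (X i) : ℝ)) * coordAvg S (margin p T) x =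
      (∏ i ∈ Tᶜ, (Fintype.card (X i) : ℝ)) * margin p S x := by
  have h_margin : margin p T =
      (fun _ => ∏ i ∈ Tᶜ, (Fintype.card (X i) : ℝ)) * coordAvg T p :=
    funext fun y => sum_filter_forall_mem_eq T p y
  have h_const : DependsOn (fun _ : ∀ i, X i => ∏ i ∈ Tᶜ, (Fintype.card (X i) : ℝ)) S :=
    (dependsOn_const _).mono (Set.empty_subset _)
  rw [h_margin, coordAvg_mul_of_dependsOn h_const, coordAvg_coordAvg, inter_eq_left.2 hST,
    margin, sum_filter_forall_mem_eq, Pi.mul_apply]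
  ring

lemma margin_union_mul_margin_inter_of_eq_mul {p g h : (∀ i, X i) → ℝ} {S T : Finset ι}
    (hg : DependsOn g S) (hh : DependsOn h T) (hp : margin p (S ∪ T) = g * h) (x : ∀ i, X i) :
    margin p (S ∪ T) x * margin p (S ∩ T) x = margin p S x * margin p T x := by
  have h_prod : (∏ i ∈ (S ∪ T)ᶜ, (Fintype.card (X i) : ℝ)) *
      ∏ i ∈ (S ∩ T)ᶜ, (Fintype.card (X i) : ℝ) =
      (∏ i ∈ Sᶜ, (Fintype.card (X i) : ℝ)) * ∏ i ∈ Tᶜ, (Fintype.card (X i) : ℝ) := by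
    rw [compl_union, compl_inter, mul_comm, prod_union_inter]
  have h_avg := congrFun (mul_coordAvg_inter_of_dependsOn hg hh) x
  rw [← hp, Pi.mul_apply, Pi.mul_apply] at h_avg
  have hS := prod_card_mul_coordAvg_margin p (subset_union_left (s₁ := S) (s₂ := T)) x
  have hT := prod_card_mul_coordAvg_margin p (subset_union_right (s₁ := S) (s₂ := T)) x
  have hST := prod_card_mul_coordAvg_margin p (inter_subset_union (s := S) (t := T)) x
  have h_ne := prod_card_ne_zero (X := X) (S ∪ T)ᶜ
  generalize (∏ i ∈ (S ∪ T)ᶜ, (Fintype.card (X i) : ℝ)) = K at h_prod hS hT hST h_ne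
  refine mul_left_cancel₀ (mul_ne_zero h_ne h_ne) ?_
  calc K * K * (margin p (S ∪ T) x * margin p (S ∩ T) x)
      = K * margin p (S ∪ T) x * (K * margin p (S ∩ T) x) := by ring
    _ = K * margin p S x * (K * margin p T x) := by
        rw [← hST, ← hS, ← hT, mul_mul_mul_comm, h_prod, h_avg, mul_mul_mul_comm]
    _ = K * K * (margin p S x * margin p T x) := by ring

theorem margin_union_mul_margin_inter_iff_exists_log_eq_add {p : (∀ i, X i) → ℝ}
    (hp : ∀ x, 0 < p x) {S T : Finset ι} :
    (∀ x, margin p (S ∪ T) x * margin p (S ∩ T) x = margin p S x * margin p T x) ↔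
      ∃ g h, DependsOn g S ∧ DependsOn h T ∧
        (fun x => Real.log (margin p (S ∪ T) x)) = g + h := by
  constructor
  · intro h_mul
    refine ⟨fun x => Real.log (margin p S x) - Real.log (margin p (S ∩ T) x),
      fun x => Real.log (margin p T x), fun x y hxy => ?_,
      fun _ _ hxy => congrArg Real.log (dependsOn_margin p T hxy), ?_⟩
    · have h_inter : margin p (S ∩ T) x = margin p (S ∩ T) y :=
        dependsOn_margin p _ fun i hi => hxy i (mem_of_mem_inter_left hi)
      simp only [dependsOn_margin p S hxy, h_inter]
    · funext x
      have h_log := congrArg Real.log (h_mul x)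
      have h_ne : ∀ R, margin p R x ≠ 0 := fun R => (margin_pos hp R x).ne'
      rw [Real.log_mul (h_ne _) (h_ne _), Real.log_mul (h_ne _) (h_ne _)] at h_log
      simp only [Pi.add_apply]
      linarith
  · rintro ⟨g, h, hg, hh, h_log⟩
    refine margin_union_mul_margin_inter_of_eq_mul (g := fun x => Real.exp (g x))
      (h := fun x => Real.exp (h x)) (fun _ _ hxy => congrArg Real.exp (hg hxy))
      (fun _ _ hxy => congrArg Real.exp (hh hxy)) ?_
    funext x
    rw [Pi.mul_apply, ← Real.exp_add, ← Pi.add_apply, ← h_log, Real.exp_log (margin_pos hp _ x)]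

theorem condIndep_iff_mll_eq_zero {p : (∀ i, X i) → ℝ} (hp : ∀ x, 0 < p x) {A B C : Finset ι}
    (hAB : Disjoint A B) : CondIndep p A B C ↔
      ∀ L, ¬ L ⊆ A ∪ C → ¬ L ⊆ B ∪ C → mll p L (A ∪ B ∪ C) = 0 := by
  have h_union : A ∪ B ∪ C = (A ∪ C) ∪ (B ∪ C) := union_union_distrib_right A B C
  have h_inter : (A ∪ C) ∩ (B ∪ C) = C := by
    rw [← inter_union_distrib_right, disjoint_iff_inter_eq_empty.1 hAB, empty_union]
  have h_log := margin_union_mul_margin_inter_iff_exists_log_eq_add hp (S := A ∪ C) (T := B ∪ C)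
  rw [h_inter, ← h_union, exists_dependsOn_add_iff_interaction_eq_zero] at h_log
  simpa only [CondIndep, mll_eq_interaction] using h_log

lemma mll_eq_zero_of_not_subset (p : (∀ i, X i) → ℝ) {L M : Finset ι} (hLM : ¬ L ⊆ M) :
    mll p L M = 0 := by
  rw [mll_eq_interaction]
  exact interaction_eq_zero_of_dependsOn
    (fun _ _ hxy => congrArg Real.log (dependsOn_margin p M hxy)) hLM

end Margin

theorem stmt3_general (p : (∀ v, 𝔛 v) → ℝ) (hp : ∀ x, 0 < p x)
    (A B C : Finset V) (hAB : Disjoint A B) (hAC : Disjoint A C) (hBC : Disjoint B C) :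
    CondIndep p A B C ↔
    (∀ A' ⊆ A, A'.Nonempty → ∀ B' ⊆ B, B'.Nonempty → ∀ C' ⊆ C, ∀ x : ∀ v, 𝔛 v,
      mll p (A' ∪ B' ∪ C') (A ∪ B ∪ C) x = 0) := by
  rw [condIndep_iff_mll_eq_zero hp hAB]
  constructor
  · rintro h_zero A' hA' ⟨a, ha⟩ B' hB' ⟨b, hb⟩ C' - x
    have haBC : a ∉ B ∪ C := notMem_union.2
      ⟨disjoint_left.1 hAB (hA' ha), disjoint_left.1 hAC (hA' ha)⟩
    have hbAC : b ∉ A ∪ C := notMem_union.2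
      ⟨disjoint_right.1 hAB (hB' hb), disjoint_left.1 hBC (hB' hb)⟩
    exact congrFun (h_zero _ (fun h => hbAC (h (by simp [hb])))
      (fun h => haBC (h (by simp [ha])))) x
  · intro h_zero L hLAC hLBC
    by_cases hL : L ⊆ A ∪ B ∪ C
    · have h_split : L = L ∩ A ∪ L ∩ B ∪ L ∩ C := by
        rw [← inter_union_distrib_left, ← inter_union_distrib_left, inter_eq_left.2 hL]
      have hLA : (L ∩ A).Nonempty := by grind
      have hLB : (L ∩ B).Nonempty := by grind
      funext x
      rw [h_split]
      exact h_zero _ inter_subset_right hLA _ inter_subset_right hLB _ inter_subset_right x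
    · exact mll_eq_zero_of_not_subset p hL

theorem stmt3 (p : (∀ v, 𝔛 v) → ℝ) (hp : ∀ x, 0 < p x) (hsum : ∑ x, p x = 1)
    (A B C : Finset V) (hA : A.Nonempty) (hB : B.Nonempty)
    (hAB : Disjoint A B) (hAC : Disjoint A C) (hBC : Disjoint B C) :
    CondIndep p A B C ↔
    (∀ A' ⊆ A, A'.Nonempty → ∀ B' ⊆ B, B'.Nonempty → ∀ C' ⊆ C, ∀ x : ∀ v, 𝔛 v,
      mll p (A' ∪ B' ∪ C') (A ∪ B ∪ C) x = 0) :=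
  stmt3_general p hp A B C hAB hAC hBC
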